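/- Assume in addition that F(t) ≥ 0 for all t > 0 and that ∫₀¹ (F(t) − Σ_{k=1}^n a_k·t^(−k) − a₀)·t^(−1) dt ≥ c₀ for some real constant c₀. Then the limit L := lim_{s→0⁺} (ζ_F(s) − a₀)/s exists and satisfies L ≥ γ·a₀ − Σ_{k=1}^n a_k/k + c₀, where γ is the Euler–Mascheroni constant; consequently the zeta-regularized determinant exp(−L) satisfies 0 < exp(−L) ≤ exp(Σ_{k=1}^n a_k/k − γ·a₀ − c₀). (This is the mechanism by which the paper proves that the regularized determinants of the Laplacians of Calabi–Yau metrics with fixed polarization class are bounded on the moduli space.) -/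

import Mathlib

open MeasureTheory Set Filter

/-!
Since `1 / Γ(s) = s / Γ(s + 1)`, for `s > 0` the difference quotient equals
`(I(s) + S(s) + J(s)) / Γ(s + 1) + a₀ * (1 / Γ(s + 1) - 1) / s`, where `I` and `J` are the integrals
over `(0, 1]` and `(1, ∞)` and `S(s) = ∑ a_k / (s - k)`. Dominated convergence gives
`I(s) → I(0)` and `J(s) → J(0)`, and `Γ'(1) = -γ` gives the limit `γ` for the last quotient, so
`L = I(0) - ∑ a_k / k + J(0) + γ * a₀`. The bound follows from `J(0) ≥ 0` (positivity of `F`) and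
`I(0) ≥ c₀`.
-/

lemma tendsto_rpow_sub_one {t : ℝ} (ht : 0 < t) :
    Tendsto (fun s : ℝ => t ^ (s - 1)) (nhdsWithin 0 (Ioi 0)) (nhds t⁻¹) := by
  have hc : Continuous fun s : ℝ => t ^ (s - 1) :=
    Continuous.rpow continuous_const (by fun_prop) fun _ => Or.inl ht.ne'
  have h := hc.tendsto 0
  rw [zero_sub, Real.rpow_neg_one] at h
  exact h.mono_left nhdsWithin_le_nhds

lemma tendsto_integral_Ioc_mul_rpow {G : ℝ → ℝ} {C : ℝ} (hG : ContinuousOn G (Ioi 0))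
    (h0 : ∀ t ∈ Ioc (0 : ℝ) 1, |G t| ≤ C * t) :
    Tendsto (fun s : ℝ => ∫ t in Ioc (0 : ℝ) 1, G t * t ^ (s - 1))
      (nhdsWithin 0 (Ioi 0)) (nhds (∫ t in Ioc (0 : ℝ) 1, G t * t⁻¹)) := by
  refine tendsto_integral_filter_of_dominated_convergence (fun _ => C) ?_ ?_ ?_ ?_
  · refine Eventually.of_forall fun s => ContinuousOn.aestronglyMeasurable ?_ measurableSet_Ioc
    exact (hG.mono fun t ht => ht.1).mul
      (continuousOn_id.rpow_const fun t ht => Or.inl (ne_of_gt ht.1))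
  · filter_upwards [self_mem_nhdsWithin] with s hs
    refine (ae_restrict_iff' measurableSet_Ioc).2 (Eventually.of_forall fun t ht => ?_)
    have hp : 0 ≤ t ^ (s - 1) := Real.rpow_nonneg ht.1.le _
    have hC : 0 ≤ C := by
      have := (abs_nonneg _).trans (h0 t ht)
      exact nonneg_of_mul_nonneg_left this ht.1
    have hts : t * t ^ (s - 1) ≤ 1 := by
      rw [← Real.rpow_one_add' ht.1.le (by have : (0 : ℝ) < s := hs; linarith)]
      exact Real.rpow_le_one ht.1.le ht.2 (by have : (0 : ℝ) < s := hs; linarith)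
    rw [Real.norm_eq_abs, abs_mul, abs_of_nonneg hp]
    calc |G t| * t ^ (s - 1) ≤ C * t * t ^ (s - 1) := by gcongr; exact h0 t ht
      _ = C * (t * t ^ (s - 1)) := by ring
      _ ≤ C := mul_le_of_le_one_right hC hts
  · exact integrableOn_const (by simp)
  · refine (ae_restrict_iff' measurableSet_Ioc).2 (Eventually.of_forall fun t ht => ?_)
    exact (tendsto_rpow_sub_one ht.1).const_mul _

lemma tendsto_integral_Ioi_mul_rpow {F : ℝ → ℝ} {C δ : ℝ} (hδ : 0 < δ)
    (hF : ContinuousOn F (Ioi 0)) (hinf : ∀ t : ℝ, 1 ≤ t → |F t| ≤ C * Real.exp (-δ * t)) :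
    Tendsto (fun s : ℝ => ∫ t in Ioi (1 : ℝ), F t * t ^ (s - 1))
      (nhdsWithin 0 (Ioi 0)) (nhds (∫ t in Ioi (1 : ℝ), F t * t⁻¹)) := by
  refine tendsto_integral_filter_of_dominated_convergence
    (fun t => C * Real.exp (-δ * t)) ?_ ?_ ?_ ?_
  · refine Eventually.of_forall fun s => ContinuousOn.aestronglyMeasurable ?_ measurableSet_Ioi
    exact (hF.mono fun t (ht : 1 < t) => zero_lt_one.trans ht).mul
      (continuousOn_id.rpow_const fun t ht => Or.inl (zero_lt_one.trans ht).ne')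
  · have h1 : ∀ᶠ s : ℝ in nhdsWithin 0 (Ioi 0), s < 1 :=
      nhdsWithin_le_nhds (Iio_mem_nhds zero_lt_one)
    filter_upwards [h1] with s hs
    refine (ae_restrict_iff' measurableSet_Ioi).2 (Eventually.of_forall fun t ht => ?_)
    have ht1 : (1 : ℝ) ≤ t := le_of_lt ht
    have hp : 0 ≤ t ^ (s - 1) := Real.rpow_nonneg (by linarith) _
    rw [Real.norm_eq_abs, abs_mul, abs_of_nonneg hp]
    exact (mul_le_of_le_one_right (abs_nonneg _)
      (Real.rpow_le_one_of_one_le_of_nonpos ht1 (by linarith))).trans (hinf t ht1)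
  · exact (exp_neg_integrableOn_Ioi 1 hδ).const_mul C
  · refine (ae_restrict_iff' measurableSet_Ioi).2 (Eventually.of_forall fun t ht => ?_)
    exact (tendsto_rpow_sub_one (zero_lt_one.trans ht)).const_mul _

/-- The derivative of `1 / Γ` at `1` is `γ`. -/
lemma tendsto_inv_Gamma_sub_one_div :
    Tendsto (fun s : ℝ => ((Real.Gamma (s + 1))⁻¹ - 1) / s) (nhdsWithin 0 (Ioi 0))
      (nhds Real.eulerMascheroniConstant) := by
  have hd : HasDerivAt (fun x => (Real.Gamma x)⁻¹) Real.eulerMascheroniConstant 1 := by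
    have h := (Real.hasDerivAt_Gamma_one).fun_inv (by simp)
    simpa using h
  have h := hd.tendsto_slope_zero_right
  refine h.congr fun s => ?_
  simp [add_comm, div_eq_inv_mul]

/-- if moreover `F ≥ 0` and `ψ₁ ≥ c₀`, then the derivative at `0` of the
continued zeta function of `F` exists and is bounded below by `γ·a₀ − Σ a_k/k + c₀`,
hence the zeta-regularized determinant `exp(−L)` is bounded:
`0 < exp(−L) ≤ exp(Σ a_k/k − γ·a₀ − c₀)`. -/
theorem regularized_determinant_bounded
    (n : ℕ) (a : ℕ → ℝ) (C δ : ℝ) (hC : 0 < C) (hδ : 0 < δ)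
    (F : ℝ → ℝ) (hF : ContinuousOn F (Ioi 0))
    (h0 : ∀ t ∈ Ioc (0:ℝ) 1,
      |F t - (∑ k ∈ Finset.Icc 1 n, a k * t ^ (-(k:ℝ))) - a 0| ≤ C * t)
    (hinf : ∀ t : ℝ, 1 ≤ t → |F t| ≤ C * Real.exp (-δ * t))
    (hpos : ∀ t : ℝ, 0 < t → 0 ≤ F t)
    (c₀ : ℝ)
    (hψ₁ : c₀ ≤ ∫ t in Ioc (0:ℝ) 1,
      (F t - (∑ k ∈ Finset.Icc 1 n, a k * t ^ (-(k:ℝ))) - a 0) * t⁻¹) :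
    ∃ L : ℝ,
      Tendsto (fun s : ℝ =>
          ((Real.Gamma s)⁻¹ *
              ((∫ t in Ioc (0:ℝ) 1,
                  (F t - (∑ k ∈ Finset.Icc 1 n, a k * t ^ (-(k:ℝ))) - a 0) * t ^ (s - 1)) +
                a 0 / s + (∑ k ∈ Finset.Icc 1 n, a k / (s - k)) +
                ∫ t in Ioi (1:ℝ), F t * t ^ (s - 1)) - a 0) / s)
        (nhdsWithin 0 (Ioi 0)) (nhds L) ∧
      Real.eulerMascheroniConstant * a 0 - (∑ k ∈ Finset.Icc 1 n, a k / k) + c₀ ≤ L ∧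
      0 < Real.exp (-L) ∧
      Real.exp (-L) ≤ Real.exp ((∑ k ∈ Finset.Icc 1 n, a k / k) -
        Real.eulerMascheroniConstant * a 0 - c₀) := by
  set G : ℝ → ℝ := fun t => F t - (∑ k ∈ Finset.Icc 1 n, a k * t ^ (-(k:ℝ))) - a 0 with hGdef
  have hG : ContinuousOn G (Ioi 0) := by
    refine (hF.sub (continuousOn_finsetSum _ fun k _ => ?_)).sub continuousOn_const
    exact continuousOn_const.mul
      (continuousOn_id.rpow_const fun t (ht : 0 < t) => Or.inl ht.ne')
  have hI := tendsto_integral_Ioc_mul_rpow hG h0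
  have hJ := tendsto_integral_Ioi_mul_rpow hδ hF hinf
  have hS : Tendsto (fun s : ℝ => ∑ k ∈ Finset.Icc 1 n, a k / (s - k)) (nhdsWithin 0 (Ioi 0))
      (nhds (-∑ k ∈ Finset.Icc 1 n, a k / k)) := by
    rw [← Finset.sum_neg_distrib]
    refine tendsto_finsetSum _ fun k hk => ?_
    have hk0 : (0 : ℝ) - k ≠ 0 := by
      have := (Finset.mem_Icc.1 hk).1
      simp only [zero_sub, ne_eq, neg_eq_zero, Nat.cast_eq_zero]
      omega
    have hc : ContinuousAt (fun s : ℝ => a k / (s - k)) 0 :=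
      ContinuousAt.div (by fun_prop) (by fun_prop) hk0
    have h := hc.tendsto.mono_left (nhdsWithin_le_nhds (s := Ioi 0))
    simpa [div_neg] using h
  have hΓ : Tendsto (fun s : ℝ => (Real.Gamma (s + 1))⁻¹) (nhdsWithin 0 (Ioi 0)) (nhds 1) := by
    have h1 : ContinuousAt Real.Gamma (0 + 1) := by
      rw [zero_add]; exact Real.hasDerivAt_Gamma_one.continuousAt
    have hc : ContinuousAt (fun s : ℝ => (Real.Gamma (s + 1))⁻¹) 0 :=
      ContinuousAt.inv₀ (ContinuousAt.comp (f := fun s : ℝ => s + 1) h1 (by fun_prop)) (by simp)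
    have h := hc.tendsto.mono_left (nhdsWithin_le_nhds (s := Ioi 0))
    simpa using h
  have hJ0 : 0 ≤ ∫ t in Ioi (1 : ℝ), F t * t⁻¹ :=
    setIntegral_nonneg measurableSet_Ioi fun t ht =>
      mul_nonneg (hpos t (zero_lt_one.trans ht)) (inv_nonneg.2 (zero_lt_one.trans ht).le)
  have hlim := (hΓ.mul ((hI.add hS).add hJ)).add (tendsto_inv_Gamma_sub_one_div.const_mul (a 0))
  have hL : Real.eulerMascheroniConstant * a 0 - (∑ k ∈ Finset.Icc 1 n, a k / k) + c₀ ≤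
      1 * ((∫ t in Ioc (0 : ℝ) 1, G t * t⁻¹) + -(∑ k ∈ Finset.Icc 1 n, a k / k) +
        ∫ t in Ioi (1 : ℝ), F t * t⁻¹) + a 0 * Real.eulerMascheroniConstant := by
    linarith
  refine ⟨_, hlim.congr' ?_, hL, Real.exp_pos _, Real.exp_le_exp.2 (by linarith)⟩
  filter_upwards [self_mem_nhdsWithin] with s hs
  have hs0 : s ≠ 0 := ne_of_gt hs
  have hg : Real.Gamma s ≠ 0 := (Real.Gamma_pos_of_pos hs).ne'
  rw [Real.Gamma_add_one hs0]
  field_simp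
  ring
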